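/- arXiv:2501.19071 — 2 statements merged into one kernel-verified Lean document; each statement's English description precedes it below -/
import Mathlib

section
/- Riesz–Markov–Kakutani representation for nonnegative Radon functionals on compactly supported Lipschitz functions: let X be a locally compact, separable metric space and let T be a real-valued map defined on the real-valued Lipschitz functions on X with compact support, such that T(φ + ψ) = T(φ) + T(ψ) and T(c·φ) = c·T(φ) for all such φ, ψ and all c ∈ ℝ, and T(φ) ≥ 0 whenever φ ≥ 0. Then there exists a unique locally finite Borel measure μ on X such that T(φ) = ∫ φ dμ for every Lipschitz function φ on X with compact support. -/
open MeasureTheory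

open scoped CompactlySupported

/-- Lipschitz cut-off functions. -/
lemma exists_lipschitz_bump {X : Type*} [MetricSpace X] [LocallyCompactSpace X]
    {K V : Set X} (hK : IsCompact K) (hV : IsOpen V) (hKV : K ⊆ V) :
    ∃ f : X → ℝ, (∃ L, LipschitzWith L f) ∧ HasCompactSupport f ∧ Set.EqOn f 1 K ∧
      tsupport f ⊆ V ∧ ∀ x, f x ∈ Set.Icc (0 : ℝ) 1 := by
  obtain ⟨K', hK', hKK', hK'V⟩ := exists_compact_between hK hV hKV
  obtain ⟨δ, δpos, hδ⟩ := hK.exists_cthickening_subset_open isOpen_interior hKK'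
  have hts : tsupport (fun x => ((thickenedIndicator δpos K x : NNReal) : ℝ)) ⊆
      Metric.cthickening δ K := by
    refine closure_minimal ?_ Metric.isClosed_cthickening
    intro x hx
    by_contra hn
    apply hx
    have := thickenedIndicator_zero δpos K
      (fun h => hn (Metric.thickening_subset_cthickening _ _ h))
    simp [this]
  refine ⟨fun x => ((thickenedIndicator δpos K x : NNReal) : ℝ), ⟨δ.toNNReal⁻¹, ?_⟩, ?_, ?_, ?_, ?_⟩
  · exact fun x y => lipschitzWith_thickenedIndicator δpos K x y
  · exact hK'.of_isClosed_subset (isClosed_tsupport _)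
      (hts.trans (hδ.trans interior_subset))
  · intro x hx
    simp [thickenedIndicator_one δpos K hx]
  · exact hts.trans (hδ.trans (interior_subset.trans hK'V))
  · intro x
    exact ⟨NNReal.coe_nonneg _, by exact_mod_cast thickenedIndicator_le_one δpos K x⟩

lemma measure_le_of_lipschitz_integral {X : Type*} [MetricSpace X] [LocallyCompactSpace X]
    [MeasurableSpace X] [BorelSpace X] {μ ν : Measure X} [ν.OuterRegular]
    [IsFiniteMeasureOnCompacts ν] [IsFiniteMeasureOnCompacts μ]
    (hμν : ∀ φ : X → ℝ, (∃ L, LipschitzWith L φ) → HasCompactSupport φ →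
      ∫ x, φ x ∂μ = ∫ x, φ x ∂ν)
    ⦃K : Set X⦄ (hK : IsCompact K) : μ K ≤ ν K := by
  refine ENNReal.le_of_forall_pos_le_add fun ε hε hν ↦ ?_
  have hνK : ν K ≠ ⊤ := hν.ne
  have hμK : μ K ≠ ⊤ := hK.measure_lt_top.ne
  obtain ⟨V, pV1, pV2, pV3⟩ : ∃ V ⊇ K, IsOpen V ∧ ν V ≤ ν K + ε :=
    Set.exists_isOpen_le_add K ν (ne_of_gt (ENNReal.coe_lt_coe.mpr hε))
  suffices μ.real K ≤ ν.real K + ε by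
    rwa [← ENNReal.toReal_le_toReal, ENNReal.toReal_add, ENNReal.coe_toReal]
    all_goals finiteness
  have VltTop : ν V < ⊤ := pV3.trans_lt <| by finiteness
  obtain ⟨f, hL, hc, pf1, pf2, pf3⟩ := exists_lipschitz_bump hK pV2 pV1
  have hcont : Continuous f := hL.choose_spec.continuous
  have hfV (x : X) : f x ≤ V.indicator 1 x := by
    by_cases hx : x ∈ tsupport f
    · simp [(pf2 hx), (pf3 x).2]
    · simp [image_eq_zero_of_notMem_tsupport hx, Set.indicator_nonneg]
  have hfK (x : X) : K.indicator 1 x ≤ f x := by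
    by_cases hx : x ∈ K
    · simp [hx, pf1 hx]
    · simp [hx, (pf3 x).1]
  calc
    μ.real K = ∫ x, K.indicator 1 x ∂μ := integral_indicator_one hK.measurableSet |>.symm
    _ ≤ ∫ x, f x ∂μ := by
      refine integral_mono ?_ (hcont.integrable_of_hasCompactSupport hc) hfK
      exact (continuousOn_const.integrableOn_compact hK).integrable_indicator hK.measurableSet
    _ ≤ ∫ x, f x ∂ν := (hμν f hL hc).le
    _ ≤ ∫ x, V.indicator 1 x ∂ν := by
      refine integral_mono (hcont.integrable_of_hasCompactSupport hc) ?_ hfV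
      exact IntegrableOn.integrable_indicator integrableOn_const pV2.measurableSet
    _ ≤ (ν K).toReal + ↑ε := by
      rwa [integral_indicator_one pV2.measurableSet, measureReal_def,
        ← ENNReal.coe_toReal, ← ENNReal.toReal_add, ENNReal.toReal_le_toReal]
      all_goals finiteness

/-- The subspace of Lipschitz functions in `C_c(X, ℝ)`. -/
def lipSub (X : Type*) [MetricSpace X] : Submodule ℝ C_c(X, ℝ) where
  carrier := {f | ∃ L, LipschitzWith L f}
  add_mem' := by
    rintro f g ⟨L, hL⟩ ⟨M, hM⟩
    exact ⟨L + M, hL.add hM⟩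
  zero_mem' := ⟨0, LipschitzWith.const 0⟩
  smul_mem' := by
    rintro c f ⟨L, hL⟩
    exact ⟨_, (lipschitzWith_smul c).comp hL⟩

/-- Riesz–Markov–Kakutani representation for nonnegative Radon functionals on compactly
supported Lipschitz functions: on a locally compact separable metric space, every
linear, nonnegative real functional on the compactly supported Lipschitz functions is
represented by integration against a unique locally finite Borel measure. -/
theorem riesz_markov_kakutani_lipschitz
    (X : Type*) [MetricSpace X] [LocallyCompactSpace X]
    [TopologicalSpace.SeparableSpace X] [MeasurableSpace X] [BorelSpace X]
    (T : (X → ℝ) → ℝ)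
    (hadd : ∀ φ ψ : X → ℝ,
      (∃ L, LipschitzWith L φ) → HasCompactSupport φ →
      (∃ L, LipschitzWith L ψ) → HasCompactSupport ψ →
      T (φ + ψ) = T φ + T ψ)
    (hsmul : ∀ (c : ℝ) (φ : X → ℝ),
      (∃ L, LipschitzWith L φ) → HasCompactSupport φ → T (c • φ) = c * T φ)
    (hpos : ∀ φ : X → ℝ,
      (∃ L, LipschitzWith L φ) → HasCompactSupport φ → (∀ x, 0 ≤ φ x) → 0 ≤ T φ) :
    ∃! μ : Measure X, IsLocallyFiniteMeasure μ ∧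
      ∀ φ : X → ℝ, (∃ L, LipschitzWith L φ) → HasCompactSupport φ →
        T φ = ∫ x, φ x ∂μ := by
  have : PosSMulMono ℝ C_c(X, ℝ) :=
    ⟨fun c hc f g hfg x => mul_le_mul_of_nonneg_left (hfg x) hc⟩
  have : SecondCountableTopology X := UniformSpace.secondCountable_of_separable X
  let F : C_c(X, ℝ) →ₗ.[ℝ] ℝ :=
    { domain := lipSub X
      toFun :=
        { toFun := fun f => T (f : C_c(X, ℝ))
          map_add' := fun f g => hadd _ _ f.2 f.1.hasCompactSupport g.2 g.1.hasCompactSupport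
          map_smul' := fun c f => hsmul c _ f.2 f.1.hasCompactSupport } }
  obtain ⟨g, hg, hgpos⟩ := riesz_extension (PointedCone.positive ℝ C_c(X, ℝ)) F
    (by
      intro f hf
      exact hpos _ f.2 f.1.hasCompactSupport (fun x => hf x))
    (by
      intro y
      obtain ⟨b, hL, hc, h1, -, h01⟩ :=
        exists_lipschitz_bump (K := tsupport y) y.hasCompactSupport isOpen_univ
          (Set.subset_univ _)
      obtain ⟨C, hC⟩ := y.hasCompactSupport.exists_bound_of_continuous y.continuous
      let b' : C_c(X, ℝ) := ⟨⟨b, hL.choose_spec.continuous⟩, hc⟩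
      have hb' : b' ∈ lipSub X := hL
      refine ⟨⟨C • b', (lipSub X).smul_mem C hb'⟩, ?_⟩
      intro x
      change 0 ≤ C * b x + y x
      by_cases hx : x ∈ tsupport y
      · have := h1 hx
        have h2 := hC x
        rw [Real.norm_eq_abs] at h2
        simp only [Pi.one_apply] at this
        rw [this]
        linarith [neg_abs_le (y x)]
      · rw [image_eq_zero_of_notMem_tsupport hx]
        have := mul_nonneg ((norm_nonneg _).trans (hC x)) (h01 x).1
        linarith)
  let Λ : C_c(X, ℝ) →ₚ[ℝ] ℝ := PositiveLinearMap.mk₀ g (fun x hx => hgpos x hx)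
  have hrep : ∀ φ : X → ℝ, (∃ L, LipschitzWith L φ) → HasCompactSupport φ →
      T φ = ∫ x, φ x ∂(RealRMK.rieszMeasure Λ) := by
    intro φ hL hc
    let f : C_c(X, ℝ) := ⟨⟨φ, hL.choose_spec.continuous⟩, hc⟩
    have h1 := RealRMK.integral_rieszMeasure Λ f
    have h2 : g f = T φ := hg ⟨f, hL⟩
    exact (h1.trans h2).symm
  refine ⟨RealRMK.rieszMeasure Λ, ⟨inferInstance, hrep⟩, ?_⟩
  rintro ν ⟨hν, hνT⟩
  apply Measure.OuterRegular.ext_isOpen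
  apply Measure.InnerRegularWRT.eq_of_innerRegularWRT_of_forall_eq Measure.Regular.innerRegular
    Measure.Regular.innerRegular
  intro K hK
  apply le_antisymm
  · exact measure_le_of_lipschitz_integral
      (fun φ h h' => (hνT φ h h').symm.trans (hrep φ h h')) hK
  · exact measure_le_of_lipschitz_integral
      (fun φ h h' => (hrep φ h h').symm.trans (hνT φ h h')) hK
end

section
/- Kantorovich duality on compact metric spaces: let X be a compact metric space, μ and ν Borel probability measures on X, and c : X × X → ℝ continuous. Then the supremum of ∫ c dπ over all couplings π of μ and ν is attained, and it equals the infimum of ∫ u dμ + ∫ v dν over all pairs of continuous functions u, v : X → ℝ satisfying c(x,y) ≤ u(x) + v(y) for all x, y ∈ X. -/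
open MeasureTheory

/-- A coupling of two Borel probability measures `μ, ν` on `X` is a Borel probability
measure on `X × X` whose marginals (pushforwards under the coordinate projections)
are `μ` and `ν`. -/
def IsCoupling {X : Type*} [MeasurableSpace X] (μ ν : Measure X)
    (π : Measure (X × X)) : Prop :=
  IsProbabilityMeasure π ∧ π.map Prod.fst = μ ∧ π.map Prod.snd = ν

open scoped CompactlySupported

/-- Values of admissible dual pairs. -/
def dualSet {X : Type*} [TopologicalSpace X] [MeasurableSpace X] (μ ν : Measure X)
    (c : X × X → ℝ) : Set ℝ :=
  {r : ℝ | ∃ u v : X → ℝ, Continuous u ∧ Continuous v ∧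
          (∀ x y : X, c (x, y) ≤ u x + v y) ∧ r = ∫ x, u x ∂μ + ∫ x, v x ∂ν}

section
variable {X : Type*} [MetricSpace X] [CompactSpace X] [MeasurableSpace X] [BorelSpace X]

lemma integrable_of_cont {Y : Type*} [MetricSpace Y] [CompactSpace Y] [MeasurableSpace Y]
    [BorelSpace Y] (μ : Measure Y) [IsFiniteMeasure μ] {u : Y → ℝ} (hu : Continuous u) :
    Integrable u μ :=
  hu.integrable_of_hasCompactSupport (HasCompactSupport.of_compactSpace u)

lemma coupling_le {μ ν : Measure X} {π : Measure (X × X)} (h : IsCoupling μ ν π)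
    {c : X × X → ℝ} (hc : Continuous c) {r : ℝ} (hr : r ∈ dualSet μ ν c) :
    ∫ z, c z ∂π ≤ r := by
  obtain ⟨u, v, hu, hv, huv, rfl⟩ := hr
  obtain ⟨hp, rfl, rfl⟩ := h
  rw [integral_map measurable_fst.aemeasurable hu.aestronglyMeasurable,
    integral_map measurable_snd.aemeasurable hv.aestronglyMeasurable,
    ← integral_add (f := fun z : X × X => u z.1) (g := fun z : X × X => v z.2)
      (integrable_of_cont π (hu.comp continuous_fst))
      (integrable_of_cont π (hv.comp continuous_snd))]
  refine integral_mono (integrable_of_cont π hc)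
    (integrable_of_cont π ((hu.comp continuous_fst).add (hv.comp continuous_snd))) ?_
  rintro ⟨x, y⟩
  exact huv x y

lemma coupling_prod (μ ν : Measure X) [IsProbabilityMeasure μ] [IsProbabilityMeasure ν] :
    IsCoupling μ ν (μ.prod ν) := by
  refine ⟨inferInstance, ?_, ?_⟩
  · simp [Measure.map_fst_prod]
  · simp [Measure.map_snd_prod]

lemma dualSet_bdd (μ ν : Measure X) [IsProbabilityMeasure μ] [IsProbabilityMeasure ν]
    {c : X × X → ℝ} (hc : Continuous c) : BddBelow (dualSet μ ν c) :=
  ⟨_, fun _ hr => coupling_le (coupling_prod μ ν) hc hr⟩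

lemma dualSet_nonempty (μ ν : Measure X) [IsProbabilityMeasure μ] [IsProbabilityMeasure ν]
    {c : X × X → ℝ} (hc : Continuous c) : (dualSet μ ν c).Nonempty := by
  obtain ⟨M, hM⟩ := (isCompact_range hc).bddAbove
  refine ⟨_, fun _ => M, fun _ => 0, continuous_const, continuous_const, fun x y => ?_, rfl⟩
  simpa using hM ⟨(x, y), rfl⟩

lemma dual_add (μ ν : Measure X) [IsProbabilityMeasure μ] [IsProbabilityMeasure ν]
    {f g : X × X → ℝ} (hf : Continuous f) (hg : Continuous g) :
    sInf (dualSet μ ν (f + g)) ≤ sInf (dualSet μ ν f) + sInf (dualSet μ ν g) := by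
  have key : ∀ r ∈ dualSet μ ν f, ∀ s ∈ dualSet μ ν g,
      sInf (dualSet μ ν (f + g)) ≤ r + s := by
    rintro r ⟨u, v, hu, hv, huv, rfl⟩ s ⟨u', v', hu', hv', huv', rfl⟩
    refine csInf_le (dualSet_bdd μ ν (hf.add hg)) ⟨u + u', v + v', hu.add hu', hv.add hv', ?_, ?_⟩
    · intro x y
      have h1 := huv x y
      have h2 := huv' x y
      simp only [Pi.add_apply]
      linarith
    · simp only [Pi.add_apply]
      rw [integral_add (integrable_of_cont μ hu) (integrable_of_cont μ hu'),
        integral_add (integrable_of_cont ν hv) (integrable_of_cont ν hv')]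
      ring
  have h1 : ∀ s ∈ dualSet μ ν g, sInf (dualSet μ ν (f + g)) - s ≤ sInf (dualSet μ ν f) :=
    fun s hs => le_csInf (dualSet_nonempty μ ν hf) fun r hr => by linarith [key r hr s hs]
  have h2 : sInf (dualSet μ ν (f + g)) - sInf (dualSet μ ν f) ≤ sInf (dualSet μ ν g) :=
    le_csInf (dualSet_nonempty μ ν hg) fun s hs => by linarith [h1 s hs]
  linarith

lemma dual_smul_le (μ ν : Measure X) [IsProbabilityMeasure μ] [IsProbabilityMeasure ν]
    {f : X × X → ℝ} (hf : Continuous f) {t : ℝ} (ht : 0 < t) :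
    sInf (dualSet μ ν (t • f)) ≤ t * sInf (dualSet μ ν f) := by
  rw [← div_le_iff₀' ht]
  refine le_csInf (dualSet_nonempty μ ν hf) ?_
  rintro r ⟨u, v, hu, hv, huv, rfl⟩
  rw [div_le_iff₀' ht]
  refine csInf_le (dualSet_bdd μ ν (hf.const_smul t))
    ⟨fun x => t * u x, fun x => t * v x, by fun_prop, by fun_prop, ?_, ?_⟩
  · intro x y
    have := mul_le_mul_of_nonneg_left (huv x y) ht.le
    simp only [Pi.smul_apply, smul_eq_mul]
    linarith
  · rw [integral_const_mul, integral_const_mul]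
    ring

lemma dual_smul (μ ν : Measure X) [IsProbabilityMeasure μ] [IsProbabilityMeasure ν]
    {f : X × X → ℝ} (hf : Continuous f) {t : ℝ} (ht : 0 < t) :
    sInf (dualSet μ ν (t • f)) = t * sInf (dualSet μ ν f) := by
  refine le_antisymm (dual_smul_le μ ν hf ht) ?_
  have h := dual_smul_le μ ν (hf.const_smul t) (inv_pos.2 ht)
  have e : t⁻¹ • t • f = f := by
    ext x
    simp [ht.ne']
  rw [e] at h
  change _ ≤ t⁻¹ * sInf (dualSet μ ν (t • f)) at h
  rwa [← div_eq_inv_mul, le_div_iff₀' ht] at h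

lemma dual_zero (μ ν : Measure X) [IsProbabilityMeasure μ] [IsProbabilityMeasure ν] :
    sInf (dualSet μ ν (0 : X × X → ℝ)) = 0 := by
  have h := dual_smul μ ν (f := 0) continuous_zero (t := 2) (by norm_num)
  rw [smul_zero] at h
  linarith

lemma hahn_banach_point {E : Type*} [AddCommGroup E] [Module ℝ E] (N : E → ℝ)
    (N_hom : ∀ t : ℝ, 0 < t → ∀ f, N (t • f) = t * N f)
    (N_add : ∀ f g, N (f + g) ≤ N f + N g) (N_zero : N 0 = 0) (c : E) :
    ∃ g : E →ₗ[ℝ] ℝ, g c = N c ∧ ∀ f, g f ≤ N f := by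
  have H : ∀ t : ℝ, t • c = 0 → (RingHom.id ℝ) t • N c = 0 := by
    intro t ht
    rcases smul_eq_zero.1 ht with h | h
    · simp [h]
    · simp [h, N_zero]
  obtain ⟨g, hg, hgN⟩ := exists_extension_of_le_sublinear
    (LinearPMap.mkSpanSingleton' c (N c) H) N N_hom N_add (by
      rintro ⟨f, hf⟩
      obtain ⟨t, rfl⟩ := Submodule.mem_span_singleton.1 hf
      rw [LinearPMap.mkSpanSingleton'_apply]
      simp only [RingHom.id_apply, smul_eq_mul]
      rcases lt_trichotomy t 0 with h | h | h
      · have h1 := N_add (t • c) ((-t) • c)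
        rw [← add_smul, add_neg_cancel, zero_smul, N_zero, N_hom (-t) (by linarith)] at h1
        linarith
      · simp [h, N_zero]
      · exact (N_hom t h c).ge)
  refine ⟨g, ?_, hgN⟩
  have := hg ⟨c, Submodule.mem_span_singleton_self c⟩
  exact this.trans (LinearPMap.mkSpanSingleton'_apply_self c (N c) H _)

lemma exists_functional (μ ν : Measure X) [IsProbabilityMeasure μ] [IsProbabilityMeasure ν]
    (c : C(X × X, ℝ)) : ∃ g : C(X × X, ℝ) →ₗ[ℝ] ℝ, g c = sInf (dualSet μ ν c) ∧
      ∀ f : C(X × X, ℝ), g f ≤ sInf (dualSet μ ν f) := by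
  let N : C(X × X, ℝ) → ℝ := fun f => sInf (dualSet μ ν f)
  have N_hom : ∀ t : ℝ, 0 < t → ∀ f, N (t • f) = t * N f := fun t ht f => by
    simp only [N, ContinuousMap.coe_smul]
    exact dual_smul μ ν f.continuous ht
  have N_add : ∀ f g, N (f + g) ≤ N f + N g := fun f g => by
    simp only [N, ContinuousMap.coe_add]
    exact dual_add μ ν f.continuous g.continuous
  have N_zero : N 0 = 0 := by
    simp only [N, ContinuousMap.coe_zero]
    exact dual_zero μ ν
  exact hahn_banach_point N N_hom N_add N_zero c

lemma exists_optimal (μ ν : Measure X) [IsProbabilityMeasure μ] [IsProbabilityMeasure ν]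
    (c : X × X → ℝ) (hc : Continuous c) : ∃ π : Measure (X × X), IsCoupling μ ν π ∧
      ∫ z, c z ∂π = sInf (dualSet μ ν c) := by
  let C : C(X × X, ℝ) → C_c(X × X, ℝ) := fun f => ⟨f, HasCompactSupport.of_compactSpace f⟩
  obtain ⟨g, hg, hgN⟩ := exists_functional μ ν ⟨c, hc⟩
  have hpos : ∀ f : C(X × X, ℝ), 0 ≤ f → 0 ≤ g f := by
    intro f hf
    have h1 := (hgN (-f)).trans (csInf_le (dualSet_bdd μ ν (-f).continuous)
      ⟨0, 0, continuous_zero, continuous_zero, fun x y => by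
        have := hf (x, y)
        simpa using this, rfl⟩)
    simp at h1
    exact h1
  let L : C_c(X × X, ℝ) →ₚ[ℝ] ℝ :=
    { toFun := fun f => g f.toContinuousMap
      map_add' := fun f f' => g.map_add f.toContinuousMap f'.toContinuousMap
      map_smul' := fun t f => g.map_smul t f.toContinuousMap
      monotone' := fun f f' h => by
        have h1 : 0 ≤ g (f'.toContinuousMap - f.toContinuousMap) :=
          hpos _ fun x => sub_nonneg.2 (h x)
        rw [map_sub] at h1
        exact sub_nonneg.1 h1 }
  let π := RealRMK.rieszMeasure L
  have hπ : ∀ f : C(X × X, ℝ), ∫ z, f z ∂π = g f := fun f =>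
    RealRMK.integral_rieszMeasure L (C f)
  have hfin : IsFiniteMeasure π := ⟨by
    refine (RealRMK.rieszMeasure_le_of_eq_one L (f := C 1) (fun x => ?_) isCompact_univ
      (fun x _ => ?_)).trans_lt ENNReal.ofReal_lt_top
    · simp [C]
    · simp [C]⟩
  have hle1 : ∀ u : C(X, ℝ), ∫ z, u z.1 ∂π ≤ ∫ x, u x ∂μ := fun u => by
    have := hπ (u.comp ContinuousMap.fst)
    refine (this.trans_le (hgN _)).trans (csInf_le (dualSet_bdd μ ν
      (u.comp ContinuousMap.fst).continuous) ⟨u, 0, u.continuous, continuous_zero, ?_, ?_⟩)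
    · intro x y
      simp
    · simp
  have hle2 : ∀ u : C(X, ℝ), ∫ z, u z.2 ∂π ≤ ∫ x, u x ∂ν := fun u => by
    have := hπ (u.comp ContinuousMap.snd)
    refine (this.trans_le (hgN _)).trans (csInf_le (dualSet_bdd μ ν
      (u.comp ContinuousMap.snd).continuous) ⟨0, u, continuous_zero, u.continuous, ?_, ?_⟩)
    · intro x y
      simp
    · simp
  have m1 : π.map Prod.fst = μ := by
    refine ext_of_forall_integral_eq_of_IsFiniteMeasure fun f => ?_
    rw [integral_map measurable_fst.aemeasurable f.continuous.aestronglyMeasurable]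
    refine le_antisymm (hle1 f.toContinuousMap) ?_
    have := hle1 (-f.toContinuousMap)
    simp only [ContinuousMap.neg_apply, integral_neg] at this
    exact neg_le_neg_iff.1 this
  have m2 : π.map Prod.snd = ν := by
    refine ext_of_forall_integral_eq_of_IsFiniteMeasure fun f => ?_
    rw [integral_map measurable_snd.aemeasurable f.continuous.aestronglyMeasurable]
    refine le_antisymm (hle2 f.toContinuousMap) ?_
    have := hle2 (-f.toContinuousMap)
    simp only [ContinuousMap.neg_apply, integral_neg] at this
    exact neg_le_neg_iff.1 this
  refine ⟨π, ⟨⟨?_⟩, m1, m2⟩, (hπ ⟨c, hc⟩).trans hg⟩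
  have := measure_univ (μ := μ)
  rwa [← m1, Measure.map_apply measurable_fst MeasurableSet.univ, Set.preimage_univ] at this

end

/-- Kantorovich duality on compact metric spaces: for a continuous cost `c`, the
supremum of `∫ c dπ` over couplings `π` of `μ` and `ν` is attained by some `π₀`, and its
value equals the infimum of `∫ u dμ + ∫ v dν` over continuous `u, v` with
`c(x,y) ≤ u(x) + v(y)` for all `x, y`. -/
theorem kantorovich_duality
    (X : Type*) [MetricSpace X] [CompactSpace X] [MeasurableSpace X] [BorelSpace X]
    (μ ν : Measure X) [IsProbabilityMeasure μ] [IsProbabilityMeasure ν]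
    (c : X × X → ℝ) (hc : Continuous c) :
    ∃ π₀ : Measure (X × X), IsCoupling μ ν π₀ ∧
      (∀ π : Measure (X × X), IsCoupling μ ν π → ∫ z, c z ∂π ≤ ∫ z, c z ∂π₀) ∧
      ∫ z, c z ∂π₀ =
        sInf {r : ℝ | ∃ u v : X → ℝ, Continuous u ∧ Continuous v ∧
          (∀ x y : X, c (x, y) ≤ u x + v y) ∧ r = ∫ x, u x ∂μ + ∫ x, v x ∂ν} := by
  obtain ⟨π, h, e⟩ := exists_optimal μ ν c hc
  refine ⟨π, h, fun π' h' => ?_, e⟩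
  rw [e]
  exact le_csInf (dualSet_nonempty μ ν hc) fun r hr => coupling_le h' hc hr
end
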